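/- Let I ⊂ ℂ[u₁,…,uₘ] be a zero-dimensional ideal with quotient ring A = ℂ[u₁,…,uₘ]/I, and let c₁,…,cₘ ∈ ℂ. For every point s = (s₁,…,sₘ) ∈ V(I), the scalar c₁s₁ + ⋯ + cₘsₘ is an eigenvalue of the linear combination M = c₁·m_{u₁} + ⋯ + cₘ·m_{uₘ} of the companion operators; moreover, any common eigenvector v of the m_{uᵢ} with m_{uᵢ} v = sᵢ·v satisfies M v = (c₁s₁ + ⋯ + cₘsₘ)·v. -/

import Mathlib

/-!
Evaluation at `s ∈ V(I)` is a ring homomorphism `A → ℂ` sending the class of `∑ cᵢuᵢ` to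
`∑ cᵢsᵢ`. Hence `∑ cᵢsᵢ - ∑ cᵢuᵢ` lies in the kernel of a homomorphism to a field and cannot be
invertible in `A`, so multiplication by it is not surjective and `∑ cᵢsᵢ` is in the spectrum of
`M`. As `A` is finite-dimensional, points of the spectrum are eigenvalues. The claim about common
eigenvectors is linearity.
-/

/-- The multiplication endomorphism `m_h` of `A = ℂ[u₁,…,uₘ]/I`,
sending `p + I` to `h·p + I`. -/
noncomputable def mulMap {m : ℕ}
    (I : Ideal (MvPolynomial (Fin m) ℂ)) (h : MvPolynomial (Fin m) ℂ) :
    Module.End ℂ (MvPolynomial (Fin m) ℂ ⧸ I) :=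
  LinearMap.mulLeft ℂ (Ideal.Quotient.mk I h)

/-- for `s ∈ V(I)` (with `I` zero-dimensional), the scalar
`c₁s₁ + ⋯ + cₘsₘ` is an eigenvalue of `M = c₁·m_{u₁} + ⋯ + cₘ·m_{uₘ}`, and any
common eigenvector `v` with `m_{uᵢ} v = sᵢ·v` satisfies `M v = (Σᵢ cᵢsᵢ)·v`. -/
theorem linear_combination_companion_eigenvalue
    (m : ℕ) (I : Ideal (MvPolynomial (Fin m) ℂ))
    [FiniteDimensional ℂ (MvPolynomial (Fin m) ℂ ⧸ I)]
    (c : Fin m → ℂ) (s : Fin m → ℂ)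
    (hs : ∀ f ∈ I, MvPolynomial.eval s f = 0) :
    Module.End.HasEigenvalue (∑ i : Fin m, c i • mulMap I (MvPolynomial.X i))
        (∑ i : Fin m, c i * s i) ∧
    ∀ v : MvPolynomial (Fin m) ℂ ⧸ I,
      (∀ i : Fin m, mulMap I (MvPolynomial.X i) v = s i • v) →
      (∑ i : Fin m, c i • mulMap I (MvPolynomial.X i)) v
        = (∑ i : Fin m, c i * s i) • v := by
  constructor
  · rw [Module.End.hasEigenvalue_iff_mem_spectrum, spectrum.mem_iff]
    intro hu
    -- Invertibility yields `a` with `(∑ cᵢsᵢ - ∑ cᵢuᵢ) * a = 1` in `A`.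
    obtain ⟨a, ha⟩ := ((Module.End.isUnit_iff _).1 hu).surjective 1
    -- Evaluation at `s` descends to the quotient because `s ∈ V(I)`.
    let e : (MvPolynomial (Fin m) ℂ ⧸ I) →ₐ[ℂ] ℂ :=
      Ideal.Quotient.liftₐ I (MvPolynomial.aeval s) hs
    have he : ∀ i, e (Ideal.Quotient.mk I (MvPolynomial.X i)) = s i :=
      fun i => MvPolynomial.aeval_X s i
    rw [LinearMap.sub_apply, Module.algebraMap_end_apply] at ha
    have h := congrArg e ha
    simp only [mulMap, LinearMap.sum_apply,
      LinearMap.smul_apply, LinearMap.mulLeft_apply, map_sub, map_sum, map_smul, map_mul, map_one,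
      he, smul_eq_mul, ← mul_assoc, ← Finset.sum_mul, sub_self] at h
    exact zero_ne_one h
  · intro v hv
    simp [LinearMap.sum_apply, hv, Finset.sum_smul, mul_smul]
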